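/- arXiv:1412.2210 — 4 statements merged into one kernel-verified Lean document; each statement's English description precedes it below -/
import Mathlib

section
/- Stein's lemma: Let σ > 0 and let Y be a real random variable distributed as the centered Gaussian measure with variance σ² on ℝ. Let f : ℝ → ℝ be differentiable, and suppose that f' is integrable with respect to this Gaussian measure and that the function y ↦ y·f(y) is integrable with respect to this Gaussian measure. Then E[Y f(Y)] = σ² E[f'(Y)]. -/
open MeasureTheory ProbabilityTheory

/-- **Stein's lemma.** If `f : ℝ → ℝ` is differentiable, its derivative is integrable with
respect to the centered Gaussian measure with variance `σ²`, and `y ↦ y * f y` is integrable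
with respect to that measure, then `E[Y f(Y)] = σ² E[f'(Y)]` where `Y` is distributed as that
Gaussian measure. -/
theorem stein_lemma (σ : ℝ) (hσ : 0 < σ) (f : ℝ → ℝ)
    (hf : Differentiable ℝ f)
    (hf' : Integrable (deriv f) (gaussianReal 0 ⟨σ ^ 2, sq_nonneg σ⟩))
    (hyf : Integrable (fun y => y * f y) (gaussianReal 0 ⟨σ ^ 2, sq_nonneg σ⟩)) :
    ∫ y, y * f y ∂(gaussianReal 0 ⟨σ ^ 2, sq_nonneg σ⟩)
      = σ ^ 2 * ∫ y, deriv f y ∂(gaussianReal 0 ⟨σ ^ 2, sq_nonneg σ⟩) := by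
  set v : NNReal := ⟨σ ^ 2, sq_nonneg σ⟩ with hvdef
  have hvc : (v : ℝ) = σ ^ 2 := rfl
  have hv : v ≠ 0 := by
    intro h
    have : (v : ℝ) = 0 := by rw [h]; rfl
    rw [hvc] at this
    exact (pow_pos hσ 2).ne' this
  have key : ∀ g : ℝ → ℝ, Integrable g (gaussianReal 0 v) →
      Integrable (fun x => gaussianPDFReal 0 v x * g x) := by
    intro g hg
    rw [gaussianReal_of_var_ne_zero _ hv, integrable_withDensity_iff_integrable_smul'
      (measurable_gaussianPDF _ _) (ae_of_all _ fun _ => gaussianPDF_lt_top)] at hg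
    simpa using hg
  have h1 := key _ hf'
  have h2 := key _ hyf
  have hp : ∀ x, HasDerivAt (gaussianPDFReal 0 v) (-(x / σ ^ 2) * gaussianPDFReal 0 v x) x := by
    intro x
    have h : HasDerivAt (fun x : ℝ => -(x - 0) ^ 2 / (2 * (v : ℝ))) (-(x / σ ^ 2)) x := by
      rw [hvc]
      have := ((((hasDerivAt_id x).sub_const 0).pow 2).neg).div_const (2 * σ ^ 2)
      refine HasDerivAt.congr_deriv this ?_
      simp only [id]
      field_simp
      norm_num
      ring
    have := h.exp.const_mul (Real.sqrt (2 * Real.pi * v))⁻¹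
    refine HasDerivAt.congr_deriv this ?_
    unfold gaussianPDFReal
    ring
  have hg : ∀ x, HasDerivAt (fun x => gaussianPDFReal 0 v x * f x)
      (gaussianPDFReal 0 v x * deriv f x
        - (σ ^ 2)⁻¹ * (gaussianPDFReal 0 v x * (x * f x))) x := by
    intro x
    refine HasDerivAt.congr_deriv ((hp x).mul (hf x).hasDerivAt) ?_
    ring
  have hgc : Continuous (fun x => gaussianPDFReal 0 v x * f x) :=
    continuous_iff_continuousAt.2 fun x => (hg x).continuousAt
  have h3 : Integrable (fun x => gaussianPDFReal 0 v x * f x) := by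
    have hi : Integrable ((Set.Icc (-1 : ℝ) 1).indicator
        (fun x => ‖gaussianPDFReal 0 v x * f x‖)) := by
      rw [integrable_indicator_iff measurableSet_Icc]
      exact hgc.norm.continuousOn.integrableOn_Icc
    refine (hi.add h2.norm).mono' hgc.aestronglyMeasurable (ae_of_all _ fun x => ?_)
    simp only [Pi.add_apply]
    by_cases hx : x ∈ Set.Icc (-1 : ℝ) 1
    · rw [Set.indicator_of_mem hx]
      exact le_add_of_nonneg_right (norm_nonneg _)
    · rw [Set.indicator_of_notMem hx, zero_add]
      have hx1 : 1 ≤ ‖x‖ := by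
        by_contra! h
        rw [Real.norm_eq_abs] at h
        exact hx (Set.mem_Icc.2 (abs_le.1 h.le))
      have : gaussianPDFReal 0 v x * (x * f x) = x * (gaussianPDFReal 0 v x * f x) := by ring
      rw [this, norm_mul x]
      exact le_mul_of_one_le_left (norm_nonneg _) hx1
  have h0 := integral_eq_zero_of_hasDerivAt_of_integrable hg (h1.sub (h2.const_mul _)) h3
  rw [integral_sub h1 (h2.const_mul _), integral_const_mul] at h0
  rw [integral_gaussianReal_eq_integral_smul hv, integral_gaussianReal_eq_integral_smul hv]
  simp only [smul_eq_mul]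
  rw [sub_eq_zero.1 h0]
  field_simp
end

section
/- Multidimensional Stein identity: Let N be a positive integer, x ∈ ℝ^N a fixed (deterministic) vector, and let w be a random vector in ℝ^N whose N components are independent, each distributed as the centered Gaussian with variance σ² (σ > 0). Set y = x + w. Let f : ℝ^N → ℝ^N be differentiable everywhere, and assume that y ↦ ⟨x, f(y)⟩, y ↦ ⟨y, f(y)⟩, and y ↦ Σ_k ∂f_k/∂y_k (y) (the divergence of f, i.e., the trace of the Fréchet derivative of f) are all integrable with respect to the distribution of y. Then E[⟨x, f(y)⟩] = E[⟨y, f(y)⟩] − σ² E[Σ_k ∂f_k/∂y_k (y)]. -/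
open MeasureTheory ProbabilityTheory

lemma stein_q_hasFDerivAt {N : ℕ} (z : Fin N → ℝ) :
    HasFDerivAt (fun z : Fin N → ℝ => ∑ i, z i ^ 2)
      (∑ i, (2 * z i) • (ContinuousLinearMap.proj (R := ℝ) (φ := fun _ : Fin N => ℝ) i)) z := by
  refine HasFDerivAt.fun_sum fun i _ => ?_
  have h := (ContinuousLinearMap.proj (R := ℝ) (φ := fun _ : Fin N => ℝ) i).hasFDerivAt (x := z)
  have h2 := h.pow 2
  simpa using h2

lemma stein_radial_hasFDerivAt {N : ℕ} (F : (Fin N → ℝ) → (Fin N → ℝ)) (z : Fin N → ℝ)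
    (u : ℝ → ℝ) (u' : ℝ) (hu : HasDerivAt u u' (∑ i, z i ^ 2)) (hF : DifferentiableAt ℝ F z) :
    DifferentiableAt ℝ (fun z => u (∑ i, z i ^ 2) • F z) z ∧
    ∑ k, fderiv ℝ (fun z => u (∑ i, z i ^ 2) • F z) z (Pi.single k 1) k
      = u (∑ i, z i ^ 2) * ∑ k, fderiv ℝ F z (Pi.single k 1) k + 2 * u' * ∑ k, z k * F z k := by
  have h1 := hu.comp_hasFDerivAt z (stein_q_hasFDerivAt z)
  have h2 := h1.smul hF.hasFDerivAt
  have h3 : HasFDerivAt (fun z => u (∑ i, z i ^ 2) • F z) _ z := h2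
  refine ⟨h3.differentiableAt, ?_⟩
  rw [h3.fderiv]
  rw [Finset.mul_sum, Finset.mul_sum, ← Finset.sum_add_distrib]
  refine Finset.sum_congr rfl fun k _ => ?_
  simp [Pi.single_apply]
  ring

lemma stein_compact {n : ℕ} (F : (Fin (n+1) → ℝ) → (Fin (n+1) → ℝ)) (hF : Differentiable ℝ F)
    (M : ℝ) (hM : 0 < M) (h0 : ∀ z i, M ≤ |z i| → F z = 0)
    (hi : Integrable (fun z => ∑ k, fderiv ℝ F z (Pi.single k 1) k)) :
    ∫ z, ∑ k, fderiv ℝ F z (Pi.single k 1) k = 0 := by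
  have key := integral_divergence_of_hasFDerivAt_off_countable (fun _ : Fin (n+1) => -M)
    (fun _ => M) (fun _ => by simp; linarith) F (fderiv ℝ F) ∅ Set.countable_empty
    hF.continuous.continuousOn (fun x _ => (hF x).hasFDerivAt) hi.integrableOn
  rw [setIntegral_eq_integral_of_forall_compl_eq_zero] at key
  · rw [key]
    refine Finset.sum_eq_zero fun i _ => ?_
    have e1 : ∀ x : Fin n → ℝ, F (i.insertNth M x) = 0 := fun x =>
      h0 _ i (by simp [abs_of_pos hM])
    have e2 : ∀ x : Fin n → ℝ, F (i.insertNth (-M) x) = 0 := fun x =>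
      h0 _ i (by simp [abs_of_pos hM])
    simp [e1, e2]
  · intro z hz
    have : ∃ i, M < |z i| := by
      by_contra! h
      exact hz ⟨fun i => (abs_le.1 (h i)).1, fun i => (abs_le.1 (h i)).2⟩
    obtain ⟨i, hi⟩ := this
    have ho : IsOpen {z : Fin (n+1) → ℝ | M < |z i|} :=
      isOpen_lt continuous_const (by fun_prop)
    have he : F =ᶠ[nhds z] fun _ => 0 := by
      filter_upwards [ho.mem_nhds hi] with y hy using h0 y i (le_of_lt hy)
    simp [he.fderiv_eq]

lemma stein_cutoff : ∃ (u u' : ℝ → ℝ) (C : ℝ), (∀ s, HasDerivAt u (u' s) s) ∧ Continuous u' ∧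
    (∀ s, |u s| ≤ 1) ∧ (∀ s, 2 ≤ s → u s = 0) ∧ u 0 = 1 ∧ ∀ s, 0 ≤ s → |u' s| ≤ C := by
  have hc : ContDiff ℝ 1 (fun s : ℝ => Real.smoothTransition (2 - s)) :=
    (Real.smoothTransition.contDiff (n := 1)).comp (contDiff_const.sub contDiff_id)
  have hd : Continuous (deriv fun s : ℝ => Real.smoothTransition (2 - s)) :=
    hc.continuous_deriv le_rfl
  have h0 : ∀ s : ℝ, 2 ≤ s → Real.smoothTransition (2 - s) = 0 := fun s hs =>
    Real.smoothTransition.zero_of_nonpos (by linarith)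
  obtain ⟨C, hC⟩ := (isCompact_Icc (a := (0:ℝ)) (b := 2)).exists_bound_of_continuousOn
    hd.continuousOn
  refine ⟨fun s => Real.smoothTransition (2 - s), _, C,
    fun s => (hc.differentiable one_ne_zero s).hasDerivAt, hd, ?_, h0, ?_, ?_⟩
  · intro s
    rw [abs_of_nonneg (Real.smoothTransition.nonneg _)]
    exact Real.smoothTransition.le_one _
  · exact Real.smoothTransition.one_of_one_le (by norm_num)
  · intro s hs
    rcases le_or_gt s 2 with h | h
    · exact hC s ⟨hs, h⟩
    · have he : (fun s : ℝ => Real.smoothTransition (2 - s)) =ᶠ[nhds s] fun _ => 0 := by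
        filter_upwards [Ioi_mem_nhds h] with y hy using h0 y (le_of_lt hy)
      rw [he.deriv_eq]
      simpa using (norm_nonneg _).trans (hC 0 ⟨le_rfl, by norm_num⟩)

lemma stein_div_measurable {N : ℕ} (F : (Fin N → ℝ) → (Fin N → ℝ)) :
    Measurable (fun z => ∑ k, fderiv ℝ F z (Pi.single k 1) k) :=
  Finset.measurable_sum _ fun k _ =>
    (measurable_pi_apply k).comp (measurable_fderiv_apply_const ℝ F (Pi.single k 1))

lemma stein_div_zero {n : ℕ} (F : (Fin (n+1) → ℝ) → (Fin (n+1) → ℝ)) (hF : Differentiable ℝ F)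
    (hi : Integrable (fun z => ∑ k, fderiv ℝ F z (Pi.single k 1) k))
    (hr : Integrable (fun z => ∑ k, z k * F z k)) :
    ∫ z, ∑ k, fderiv ℝ F z (Pi.single k 1) k = 0 := by
  obtain ⟨u, u', C, hu, hu'c, hu1, hu0, huz, hC⟩ := stein_cutoff
  have hC0 : 0 ≤ C := (abs_nonneg _).trans (hC 0 le_rfl)
  set r : ℕ → ℝ := fun m => 1 / ((m : ℝ) + 1) with hrdef
  have hrpos : ∀ m, 0 < r m := fun m => Nat.one_div_pos_of_nat
  have hrle : ∀ m, r m ≤ 1 := fun m => by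
    rw [hrdef]; simp only
    rw [div_le_one (by positivity)]
    have : (0:ℝ) ≤ m := m.cast_nonneg
    linarith
  have hr0 : Filter.Tendsto r Filter.atTop (nhds 0) := tendsto_one_div_add_atTop_nhds_zero_nat
  have hum : ∀ m s, HasDerivAt (fun s => u (s * r m ^ 2)) (u' (s * r m ^ 2) * r m ^ 2) s := by
    intro m s
    have h1 : HasDerivAt (fun s : ℝ => s * r m ^ 2) (r m ^ 2) s := by
      simpa using (hasDerivAt_id s).mul_const (r m ^ 2)
    exact (hu (s * r m ^ 2)).comp s h1
  have hdiv := fun m z => stein_radial_hasFDerivAt F z _ _ (hum m (∑ i, z i ^ 2)) (hF z)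
  have hbound : ∀ m z, ‖∑ k, fderiv ℝ (fun z => u ((∑ i, z i ^ 2) * r m ^ 2) • F z) z
      (Pi.single k 1) k‖ ≤ ‖∑ k, fderiv ℝ F z (Pi.single k 1) k‖
        + 2 * C * ‖∑ k, z k * F z k‖ := by
    intro m z
    rw [(hdiv m z).2]
    refine (norm_add_le _ _).trans ?_
    rw [norm_mul, norm_mul]
    have hq : 0 ≤ (∑ i, z i ^ 2) * r m ^ 2 := by positivity
    have hr2 : r m ^ 2 ≤ 1 := pow_le_one₀ (hrpos m).le (hrle m)
    gcongr
    · exact mul_le_of_le_one_left (norm_nonneg _) (hu1 _)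
    · rw [norm_mul, norm_mul, Real.norm_two, Real.norm_of_nonneg (by positivity : 0 ≤ r m ^ 2)]
      have := hC _ hq
      rw [← Real.norm_eq_abs] at this
      nlinarith [norm_nonneg (u' ((∑ i, z i ^ 2) * r m ^ 2))]
  have hbi : Integrable (fun z => ‖∑ k, fderiv ℝ F z (Pi.single k 1) k‖
        + 2 * C * ‖∑ k, z k * F z k‖) := hi.norm.add (hr.norm.const_mul _)
  have hzero : ∀ m, ∫ z, ∑ k, fderiv ℝ (fun z => u ((∑ i, z i ^ 2) * r m ^ 2) • F z) z
      (Pi.single k 1) k = 0 := by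
    intro m
    refine stein_compact _ (fun z => (hdiv m z).1) (2 / r m) (by have := hrpos m; positivity) ?_ ?_
    · intro z i hz
      rw [hu0, zero_smul]
      rw [div_le_iff₀ (hrpos m)] at hz
      have h1 : z i ^ 2 ≤ ∑ i, z i ^ 2 :=
        Finset.single_le_sum (f := fun i => z i ^ 2) (fun i _ => sq_nonneg _) (Finset.mem_univ i)
      have h2 : (2:ℝ) ^ 2 ≤ (|z i| * r m) ^ 2 := pow_le_pow_left₀ (by norm_num) hz 2
      rw [mul_pow, sq_abs] at h2
      nlinarith [mul_le_mul_of_nonneg_right h1 (sq_nonneg (r m))]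
    · exact hbi.mono' (stein_div_measurable _).aestronglyMeasurable
        (Filter.Eventually.of_forall (hbound m))
  have hlim := tendsto_integral_of_dominated_convergence (μ := volume)
    (F := fun m z => ∑ k, fderiv ℝ (fun z => u ((∑ i, z i ^ 2) * r m ^ 2) • F z) z
      (Pi.single k 1) k) (f := fun z => ∑ k, fderiv ℝ F z (Pi.single k 1) k) _
    (fun m => (stein_div_measurable _).aestronglyMeasurable) hbi
    (fun m => Filter.Eventually.of_forall (hbound m)) (Filter.Eventually.of_forall ?_)
  · simp only [hzero] at hlim
    exact tendsto_nhds_unique hlim tendsto_const_nhds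
  · intro z
    simp only [fun m => (hdiv m z).2]
    have huc : Continuous u := continuous_iff_continuousAt.2 fun s => (hu s).continuousAt
    have hcont : Continuous fun t : ℝ => u ((∑ i, z i ^ 2) * t ^ 2) *
        ∑ k, fderiv ℝ F z (Pi.single k 1) k
        + 2 * (u' ((∑ i, z i ^ 2) * t ^ 2) * t ^ 2) * ∑ k, z k * F z k := by fun_prop
    have := (hcont.tendsto 0).comp hr0
    simpa [huz, Function.comp_def] using this

lemma stein_pi_density {N : ℕ} (v : NNReal) (hv : v ≠ 0) :
    Measure.pi (fun _ : Fin N => gaussianReal 0 v)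
      = volume.withDensity (fun z : Fin N → ℝ => ENNReal.ofReal (∏ i, gaussianPDFReal 0 v (z i))) := by
  refine Measure.pi_eq fun s hs => ?_
  rw [withDensity_apply _ (MeasurableSet.univ_pi hs), volume_pi, Measure.restrict_pi_pi,
    ← ofReal_integral_eq_lintegral_ofReal, integral_fintype_prod_eq_prod,
    ENNReal.ofReal_prod_of_nonneg]
  · exact Finset.prod_congr rfl fun i _ => (gaussianReal_apply_eq_integral 0 hv (s i)).symm
  · intro i _
    exact integral_nonneg fun x => gaussianPDFReal_nonneg _ _ _
  · exact Integrable.fintype_prod fun i => (integrable_gaussianPDFReal 0 v).restrict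
  · exact Filter.Eventually.of_forall fun z =>
      Finset.prod_nonneg fun i _ => gaussianPDFReal_nonneg _ _ _

/-- Gaussian integration by parts with respect to the explicit density. -/
lemma stein_gauss {n : ℕ} (v : NNReal) (hv : v ≠ 0) (G : (Fin (n+1) → ℝ) → (Fin (n+1) → ℝ))
    (hG : Differentiable ℝ G)
    (h1 : Integrable (fun z => ∑ k, z k * G z k) (Measure.pi (fun _ => gaussianReal 0 v)))
    (h2 : Integrable (fun z => ∑ k, fderiv ℝ G z (Pi.single k 1) k)
      (Measure.pi (fun _ => gaussianReal 0 v))) :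
    ∫ z, ∑ k, z k * G z k ∂(Measure.pi (fun _ => gaussianReal 0 v))
      = v * ∫ z, ∑ k, fderiv ℝ G z (Pi.single k 1) k ∂(Measure.pi (fun _ => gaussianReal 0 v)) := by
  have hv' : (v : ℝ) ≠ 0 := by exact_mod_cast hv
  have hm : Measurable (fun z : Fin (n+1) → ℝ =>
      ENNReal.ofReal (∏ i, gaussianPDFReal 0 v (z i))) := by
    refine ENNReal.measurable_ofReal.comp (Finset.measurable_prod _ fun i _ => ?_)
    exact (measurable_gaussianPDFReal 0 v).comp (measurable_pi_apply i)
  rw [stein_pi_density v hv] at *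
  rw [integrable_withDensity_iff_integrable_smul' hm (by simp)] at h1 h2
  rw [integral_withDensity_eq_integral_toReal_smul hm (by simp),
    integral_withDensity_eq_integral_toReal_smul hm (by simp)]
  set c : ℝ := ((√(2 * Real.pi * v))⁻¹) ^ (n+1) with hc
  set u : ℝ → ℝ := fun s => c * Real.exp (-s / (2 * v)) with hu
  have hρ : ∀ z : Fin (n+1) → ℝ, (ENNReal.ofReal (∏ i, gaussianPDFReal 0 v (z i))).toReal
      = u (∑ i, z i ^ 2) := by
    intro z
    rw [ENNReal.toReal_ofReal (Finset.prod_nonneg fun i _ => gaussianPDFReal_nonneg _ _ _)]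
    simp only [gaussianPDFReal, Finset.prod_mul_distrib, ← Real.exp_sum, hu, hc, sub_zero]
    simp [← Finset.sum_div]
  simp only [hρ, smul_eq_mul] at h1 h2 ⊢
  have hud : ∀ s, HasDerivAt u (-(1 / (2 * v)) * u s) s := by
    intro s
    have := (((hasDerivAt_id s).neg.div_const (2 * (v:ℝ))).exp).const_mul c
    refine this.congr_deriv ?_
    simp only [hu, id, Pi.neg_apply]
    ring
  have hdiv := fun z => stein_radial_hasFDerivAt G z _ _ (hud (∑ i, z i ^ 2)) (hG z)
  have hdeq : (fun z => ∑ k, fderiv ℝ (fun z => u (∑ i, z i ^ 2) • G z) z (Pi.single k 1) k)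
      = fun z => u (∑ i, z i ^ 2) * ∑ k, fderiv ℝ G z (Pi.single k 1) k
        - (v:ℝ)⁻¹ * (u (∑ i, z i ^ 2) * ∑ k, z k * G z k) := by
    funext z
    rw [(hdiv z).2]
    field_simp
    ring
  have h1' := h1.const_mul (v:ℝ)⁻¹
  have := stein_div_zero (fun z => u (∑ i, z i ^ 2) • G z) (fun z => (hdiv z).1)
    (by rw [hdeq]; exact h2.sub h1')
    (by
      refine h1.congr (Filter.Eventually.of_forall fun z => ?_)
      simp only
      rw [Finset.mul_sum]
      refine Finset.sum_congr rfl fun k _ => ?_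
      simp; ring)
  rw [hdeq, integral_sub h2 h1', integral_const_mul] at this
  field_simp at this
  linarith

/-- **Multidimensional Stein identity.** Let `y = x + w` where `x ∈ ℝᴺ` is deterministic and the
components of `w` are independent centered Gaussians with variance `σ²`. For a differentiable
`f : ℝᴺ → ℝᴺ` (with the stated integrability assumptions),
`E[⟨x, f(y)⟩] = E[⟨y, f(y)⟩] − σ² E[∑ₖ ∂fₖ/∂yₖ (y)]`. -/
theorem multidim_stein_identity
    {Ω : Type*} [MeasurableSpace Ω] (P : Measure Ω) [IsProbabilityMeasure P]
    (N : ℕ) (hN : 0 < N) (σ : ℝ) (hσ : 0 < σ)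
    (x : Fin N → ℝ) (w : Ω → Fin N → ℝ)
    (hw_meas : ∀ i, Measurable fun ω => w ω i)
    (hw_indep : iIndepFun (fun i ω => w ω i) P)
    (hw_gauss : ∀ i, Measure.map (fun ω => w ω i) P = gaussianReal 0 ⟨σ ^ 2, sq_nonneg σ⟩)
    (y : Ω → Fin N → ℝ) (hy : ∀ ω, y ω = x + w ω)
    (f : (Fin N → ℝ) → (Fin N → ℝ)) (hf : Differentiable ℝ f)
    (hint₁ : Integrable (fun ω => ∑ k, x k * f (y ω) k) P)
    (hint₂ : Integrable (fun ω => ∑ k, y ω k * f (y ω) k) P)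
    (hint₃ : Integrable (fun ω => ∑ k, fderiv ℝ f (y ω) (Pi.single k 1) k) P) :
    ∫ ω, ∑ k, x k * f (y ω) k ∂P
      = ∫ ω, ∑ k, y ω k * f (y ω) k ∂P
        - σ ^ 2 * ∫ ω, ∑ k, fderiv ℝ f (y ω) (Pi.single k 1) k ∂P := by
  obtain ⟨n, rfl⟩ : ∃ n, N = n + 1 := ⟨N - 1, by omega⟩
  set v : NNReal := ⟨σ ^ 2, sq_nonneg σ⟩ with hvdef
  have hvσ : (v : ℝ) = σ ^ 2 := rfl
  have hv : v ≠ 0 := by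
    intro h
    have : (v : ℝ) = 0 := by rw [h]; rfl
    rw [hvσ] at this
    exact (pow_pos hσ 2).ne' this
  have hwm : Measurable w := measurable_pi_iff.2 hw_meas
  have hmap : P.map w = Measure.pi (fun _ => gaussianReal 0 v) := by
    have := (iIndepFun_iff_map_fun_eq_pi_map (fun i => (hw_meas i).aemeasurable)).1 hw_indep
    simp only [hw_gauss] at this
    exact this
  set G : (Fin (n+1) → ℝ) → (Fin (n+1) → ℝ) := fun z => f (x + z) with hGdef
  have hG : Differentiable ℝ G := hf.comp ((differentiable_const x).add differentiable_id)
  have hGd : ∀ z, fderiv ℝ G z = fderiv ℝ f (x + z) := fun z => fderiv_comp_add_left x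
  have hfy : ∀ ω, f (y ω) = G (w ω) := fun ω => by rw [hy]
  have hdy : ∀ ω, fderiv ℝ f (y ω) = fderiv ℝ G (w ω) := fun ω => by rw [hy, hGd]
  have hsub : (fun ω => ∑ k, w ω k * G (w ω) k)
      = fun ω => ∑ k, y ω k * f (y ω) k - ∑ k, x k * f (y ω) k := by
    funext ω
    rw [← Finset.sum_sub_distrib]
    refine Finset.sum_congr rfl fun k _ => ?_
    rw [hfy, hy]
    simp only [Pi.add_apply]
    ring
  have hm1 : AEStronglyMeasurable (fun z => ∑ k, z k * G z k) (P.map w) := by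
    have := hG.continuous
    exact Continuous.aestronglyMeasurable (by fun_prop)
  have hm2 : AEStronglyMeasurable (fun z => ∑ k, fderiv ℝ G z (Pi.single k 1) k) (P.map w) :=
    (stein_div_measurable G).aestronglyMeasurable
  have hi1 : Integrable (fun ω => ∑ k, w ω k * G (w ω) k) P := by
    rw [hsub]; exact hint₂.sub hint₁
  simp only [hdy] at hint₃ ⊢
  have key := stein_gauss v hv G hG
    (by rw [← hmap]; exact (integrable_map_measure hm1 hwm.aemeasurable).2 hi1)
    (by rw [← hmap]; exact (integrable_map_measure hm2 hwm.aemeasurable).2 hint₃)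
  rw [← hmap, integral_map hwm.aemeasurable hm1, integral_map hwm.aemeasurable hm2, hsub,
    integral_sub hint₂ hint₁, hvσ] at key
  linarith
end

section
/- Distribution-free unbiased estimate of the cross term: Let N be a positive integer, let x ∈ ℝ^N be a fixed (deterministic) vector, and let w : Ω → ℝ^N be a random vector whose components are square-integrable with zero mean, variance σ², and mutually uncorrelated (E[w_i w_j] = 0 for i ≠ j). Set y = x + w and let H be an N×N real matrix all of whose diagonal entries equal h₀. Then E[⟨x, Hy⟩] = E[⟨y, Hy⟩] − Nσ² h₀; equivalently, the random variable ⟨y, Hy⟩ − Nσ² h₀ is an unbiased estimator of E[⟨x, Hy⟩]. -/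
open MeasureTheory

/-- **Distribution-free unbiased estimate of the cross term.** With `y = x + w`, `x`
deterministic, `w` having square-integrable components with zero mean, variance `σ²`, and
mutually uncorrelated, and `H` an `N × N` matrix with all diagonal entries equal to `h₀`,
`E[⟨x, Hy⟩] = E[⟨y, Hy⟩] − N σ² h₀`. -/
theorem crossterm_unbiased_estimate
    {Ω : Type*} [MeasurableSpace Ω] (P : Measure Ω) [IsProbabilityMeasure P]
    (N : ℕ) (hN : 0 < N) (σ : ℝ)
    (x : Fin N → ℝ) (w : Ω → Fin N → ℝ)
    (hw_sq : ∀ i, MemLp (fun ω => w ω i) 2 P)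
    (hw_mean : ∀ i, ∫ ω, w ω i ∂P = 0)
    (hw_var : ∀ i, ∫ ω, (w ω i) ^ 2 ∂P = σ ^ 2)
    (hw_uncorr : ∀ i j, i ≠ j → ∫ ω, w ω i * w ω j ∂P = 0)
    (y : Ω → Fin N → ℝ) (hy : ∀ ω, y ω = x + w ω)
    (H : Matrix (Fin N) (Fin N) ℝ) (h₀ : ℝ) (hH : ∀ i, H i i = h₀) :
    ∫ ω, ∑ i, x i * H.mulVec (y ω) i ∂P
      = ∫ ω, ∑ i, y ω i * H.mulVec (y ω) i ∂P - N * σ ^ 2 * h₀ := by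
  have hI : ∀ i, Integrable (fun ω => w ω i) P := fun i =>
    (hw_sq i).integrable (by norm_num)
  have hII : ∀ i j, Integrable (fun ω => w ω i * w ω j) P := fun i j =>
    (hw_sq i).integrable_mul (hw_sq j)
  have hA : Integrable (fun ω => ∑ i, x i * H.mulVec (y ω) i) P := by
    simp only [Matrix.mulVec, dotProduct, hy, Pi.add_apply]
    refine integrable_finset_sum _ fun i _ => Integrable.const_mul ?_ _
    refine integrable_finset_sum _ fun j _ => Integrable.const_mul ?_ _
    exact (integrable_const _).add (hI j)
  have hBt : ∀ i j, Integrable (fun ω => H i j * (x j * w ω i + w ω i * w ω j)) P :=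
    fun i j => (((hI i).const_mul _).add (hII i j)).const_mul _
  have hB : Integrable (fun ω => ∑ i, ∑ j, H i j * (x j * w ω i + w ω i * w ω j)) P :=
    integrable_finset_sum _ fun i _ => integrable_finset_sum _ fun j _ => hBt i j
  have hsplit : ∀ ω, ∑ i, y ω i * H.mulVec (y ω) i
      = ∑ i, x i * H.mulVec (y ω) i
        + ∑ i, ∑ j, H i j * (x j * w ω i + w ω i * w ω j) := by
    intro ω
    rw [← Finset.sum_add_distrib]
    refine Finset.sum_congr rfl fun i _ => ?_
    simp only [Matrix.mulVec, dotProduct, hy, Pi.add_apply]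
    rw [add_mul, Finset.mul_sum (a := w ω i)]
    congr 1
    refine Finset.sum_congr rfl fun j _ => ?_
    ring
  have hterm : ∀ i j, ∫ ω, H i j * (x j * w ω i + w ω i * w ω j) ∂P
      = if i = j then σ ^ 2 * h₀ else 0 := by
    intro i j
    rw [integral_const_mul, integral_add ((hI i).const_mul _) (hII i j),
      integral_const_mul, hw_mean]
    split_ifs with h
    · subst h
      have h2 := hw_var i
      simp only [pow_two] at h2
      rw [h2, hH]
      ring
    · rw [hw_uncorr i j h]
      ring
  have hBv : ∫ ω, ∑ i, ∑ j, H i j * (x j * w ω i + w ω i * w ω j) ∂P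
      = N * σ ^ 2 * h₀ := by
    rw [integral_finset_sum _ fun i _ => integrable_finset_sum _ fun j _ => hBt i j]
    simp_rw [integral_finset_sum _ fun j _ => hBt _ j, hterm]
    simp
    ring
  simp_rw [hsplit]
  rw [integral_add hA hB, hBv]
  ring
end

section
/- Proposition 1 (Stein-free unbiased risk estimate): Let y = x + w, where x ∈ ℝ^N is a fixed (deterministic) vector and w : Ω → ℝ^N is a random vector whose components are square-integrable with zero mean (E[w_i] = 0), variance σ² (E[w_i²] = σ²), and mutually uncorrelated (E[w_i w_j] = 0 for i ≠ j). Let H be an N×N real matrix all of whose diagonal entries equal h₀ (for instance, a Toeplitz operator built from a stable filter; its principal diagonal entry is h₀). Then the random variable Ĉ(y) = ‖Hy − y‖² + 2σ²N h₀ − Nσ² is an unbiased estimate of the mean-square error C = E[‖x − Hy‖²], i.e., E[‖Hy − y‖² + 2σ²N h₀ − Nσ²] = E[‖x − Hy‖²]. No distributional assumption on w (in particular, no Gaussianity) is required. -/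
open MeasureTheory

/-- **Proposition 1 (Stein-free unbiased risk estimate).** With `y = x + w`, `x ∈ ℝᴺ`
deterministic, `w` having square-integrable components with zero mean, variance `σ²`, and
mutually uncorrelated, and `H` an `N × N` matrix all of whose diagonal entries equal `h₀`, the
random variable `Ĉ(y) = ‖Hy − y‖² + 2σ²N h₀ − Nσ²` is an unbiased estimate of the mean-square
error: `E[‖Hy − y‖² + 2σ²N h₀ − Nσ²] = E[‖x − Hy‖²]`. No distributional assumption on `w` is
required. -/
theorem stein_free_unbiased_risk_estimate
    {Ω : Type*} [MeasurableSpace Ω] (P : Measure Ω) [IsProbabilityMeasure P]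
    (N : ℕ) (hN : 0 < N) (σ : ℝ)
    (x : Fin N → ℝ) (w : Ω → Fin N → ℝ)
    (hw_sq : ∀ i, MemLp (fun ω => w ω i) 2 P)
    (hw_mean : ∀ i, ∫ ω, w ω i ∂P = 0)
    (hw_var : ∀ i, ∫ ω, (w ω i) ^ 2 ∂P = σ ^ 2)
    (hw_uncorr : ∀ i j, i ≠ j → ∫ ω, w ω i * w ω j ∂P = 0)
    (y : Ω → Fin N → ℝ) (hy : ∀ ω, y ω = x + w ω)
    (H : Matrix (Fin N) (Fin N) ℝ) (h₀ : ℝ) (hH : ∀ i, H i i = h₀) :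
    ∫ ω, (∑ i, (H.mulVec (y ω) i - y ω i) ^ 2
        + 2 * σ ^ 2 * N * h₀ - N * σ ^ 2) ∂P
      = ∫ ω, ∑ i, (x i - H.mulVec (y ω) i) ^ 2 ∂P := by
  have hyi : ∀ ω i, y ω i = x i + w ω i := fun ω i => by rw [hy]; rfl
  have hyL : ∀ i, MemLp (fun ω => y ω i) 2 P := by
    intro i
    simp only [hyi]
    exact (memLp_const (x i)).add (hw_sq i)
  have haL : ∀ i, MemLp (fun ω => H.mulVec (y ω) i) 2 P := by
    intro i
    simp only [Matrix.mulVec, dotProduct]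
    exact memLp_finsetSum _ fun j _ => (hyL j).const_mul (H i j)
  have hwI : ∀ i, Integrable (fun ω => w ω i) P := fun i => (hw_sq i).integrable (by norm_num)
  have hwwI : ∀ i j, Integrable (fun ω => w ω i * w ω j) P :=
    fun i j => (hw_sq i).integrable_mul (hw_sq j)
  have hywI : ∀ j i, Integrable (fun ω => y ω j * w ω i) P :=
    fun j i => (hyL j).integrable_mul (hw_sq i)
  have hawI : ∀ i, Integrable (fun ω => H.mulVec (y ω) i * w ω i) P :=
    fun i => (haL i).integrable_mul (hw_sq i)
  have hyw : ∀ j i, ∫ ω, y ω j * w ω i ∂P = if j = i then σ ^ 2 else 0 := by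
    intro j i
    simp only [hyi, add_mul]
    rw [integral_add ((hwI i).const_mul _) (hwwI j i), integral_const_mul, hw_mean]
    split_ifs with h
    · subst h
      simp only [← pow_two, hw_var]
      ring
    · rw [hw_uncorr j i h]
      ring
  have haw : ∀ i, ∫ ω, H.mulVec (y ω) i * w ω i ∂P = h₀ * σ ^ 2 := by
    intro i
    simp only [Matrix.mulVec, dotProduct, Finset.sum_mul, mul_assoc]
    rw [integral_finsetSum _ fun j _ => (hywI j i).const_mul _]
    simp [integral_const_mul, hyw, hH]
  have hrI : ∀ i, Integrable (fun ω => (x i - H.mulVec (y ω) i) ^ 2) P :=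
    fun i => ((memLp_const (x i)).sub (haL i)).integrable_sq
  have hlI : ∀ i, Integrable (fun ω => (H.mulVec (y ω) i - y ω i) ^ 2) P :=
    fun i => ((haL i).sub (hyL i)).integrable_sq
  have key : ∀ i, ∫ ω, (H.mulVec (y ω) i - y ω i) ^ 2 ∂P
      = ∫ ω, (x i - H.mulVec (y ω) i) ^ 2 ∂P - 2 * (h₀ * σ ^ 2) + σ ^ 2 := by
    intro i
    have e : ∀ ω, (H.mulVec (y ω) i - y ω i) ^ 2 = (x i - H.mulVec (y ω) i) ^ 2
        - 2 * (H.mulVec (y ω) i * w ω i) + (2 * x i * w ω i + w ω i ^ 2) := by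
      intro ω
      rw [hyi]
      ring
    have i1 := (hawI i).const_mul 2
    have i2 := (hwI i).const_mul (2 * x i)
    have i3 := (hw_sq i).integrable_sq
    simp only [e]
    have i4 : Integrable (fun ω => (x i - H.mulVec (y ω) i) ^ 2
        - 2 * (H.mulVec (y ω) i * w ω i)) P := (hrI i).sub i1
    have i5 : Integrable (fun ω => 2 * x i * w ω i + w ω i ^ 2) P := i2.add i3
    rw [integral_add i4 i5, integral_sub (hrI i) i1,
      integral_add i2 i3, integral_const_mul, integral_const_mul, haw, hw_mean, hw_var]
    ring
  have hS := integrable_finsetSum Finset.univ fun i _ => hlI i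
  have hS2 : Integrable (fun ω => ∑ i, (H.mulVec (y ω) i - y ω i) ^ 2
      + 2 * σ ^ 2 * N * h₀) P := hS.add (integrable_const _)
  rw [integral_sub hS2 (integrable_const _),
    integral_add hS (integrable_const _), integral_finsetSum _ fun i _ => hlI i,
    integral_finsetSum _ fun i _ => hrI i]
  simp only [key, Finset.sum_add_distrib, Finset.sum_sub_distrib]
  simp
  ring
end
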